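/- Let F be a field and M ≥ 1. The system matrix Q = [[I_M, Q12],[Q21, I_{M−1}]] ∈ F^{(2M−1)×(2M−1)} is invertible, and its inverse is given explicitly by Q^{-1} = blockdiag(M1, M2) · Q · blockdiag(I_M, −I_{M−1}), where M1 = (I_M − Q12·Q21)^{-1} and M2 = −(I_{M−1} − Q21·Q12)^{-1}. -/

import Mathlib

open Matrix

/-- `Q12 ∈ F^{M×(M−1)}`: a zero row on top of the identity matrix `I_{M−1}`. -/
def Q12 (F : Type*) [Semiring F] (M : ℕ) : Matrix (Fin M) (Fin (M - 1)) F :=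
  fun i j => if (i : ℕ) = (j : ℕ) + 1 then 1 else 0

/-- `Q21 ∈ F^{(M−1)×M}`: the identity matrix `I_{M−1}` followed by a zero column. -/
def Q21 (F : Type*) [Semiring F] (M : ℕ) : Matrix (Fin (M - 1)) (Fin M) F :=
  fun i j => if (i : ℕ) = (j : ℕ) then 1 else 0

/-!
Write `Q = [[1, A], [B, 1]]` and `J = blockdiag(1, -1)`. The off-diagonal blocks of `Q * J * Q`
cancel, leaving `blockdiag(1 - A * B, -(1 - B * A))`. As `Q`, `1 - A * B` and `1 - B * A` have the
same determinant, the inverse of `Q` can be read off as soon as `1 - A * B` is invertible. For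
`A = Q12` and `B = Q21` the product `A * B` is the subdiagonal shift, so `1 - A * B` is lower
unitriangular.
-/

section BlockMatrix

variable {m n R : Type*} [Fintype m] [Fintype n] [DecidableEq m] [DecidableEq n]

theorem fromBlocks_one_mul_blockdiag_one_neg_one_mul_self [NonAssocRing R]
    (A : Matrix m n R) (B : Matrix n m R) :
    fromBlocks 1 A B 1 * fromBlocks 1 0 0 (-1) * fromBlocks 1 A B 1 =
      fromBlocks (1 - A * B) 0 0 (-(1 - B * A)) := by
  simp [fromBlocks_multiply, sub_eq_add_neg, add_comm]

variable [CommRing R] {A : Matrix m n R} {B : Matrix n m R}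

theorem isUnit_one_sub_mul_comm : IsUnit (1 - A * B) ↔ IsUnit (1 - B * A) := by
  rw [isUnit_iff_isUnit_det, isUnit_iff_isUnit_det, det_one_sub_mul_comm]

theorem isUnit_fromBlocks_one_iff : IsUnit (fromBlocks 1 A B 1) ↔ IsUnit (1 - A * B) := by
  rw [isUnit_iff_isUnit_det, isUnit_iff_isUnit_det, det_fromBlocks_one₂₂]

theorem inv_fromBlocks_one (h : IsUnit (1 - A * B)) :
    (fromBlocks 1 A B 1)⁻¹ =
      fromBlocks (1 - A * B)⁻¹ 0 0 (-(1 - B * A)⁻¹) * fromBlocks 1 A B 1 *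
        fromBlocks 1 0 0 (-1) := by
  have hAB : (1 - A * B)⁻¹ * (1 - A * B) = 1 :=
    nonsing_inv_mul _ ((isUnit_iff_isUnit_det _).mp h)
  have hBA : (1 - B * A)⁻¹ * (1 - B * A) = 1 :=
    nonsing_inv_mul _ ((isUnit_iff_isUnit_det _).mp (isUnit_one_sub_mul_comm.mp h))
  apply inv_eq_left_inv
  calc
    _ = fromBlocks (1 - A * B)⁻¹ 0 0 (-(1 - B * A)⁻¹) *
        (fromBlocks 1 A B 1 * fromBlocks 1 0 0 (-1) * fromBlocks 1 A B 1) := by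
      simp only [Matrix.mul_assoc]
    _ = fromBlocks (1 - A * B)⁻¹ 0 0 (-(1 - B * A)⁻¹) *
        fromBlocks (1 - A * B) 0 0 (-(1 - B * A)) := by
      rw [fromBlocks_one_mul_blockdiag_one_neg_one_mul_self]
    _ = fromBlocks ((1 - A * B)⁻¹ * (1 - A * B)) 0 0 ((1 - B * A)⁻¹ * (1 - B * A)) := by
      simp only [fromBlocks_multiply, Matrix.mul_zero, Matrix.zero_mul, add_zero, zero_add,
        Matrix.neg_mul, Matrix.mul_neg, neg_neg, neg_zero]
    _ = 1 := by rw [hAB, hBA, fromBlocks_one]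

end BlockMatrix

theorem det_one_sub_of_strictLowerTriangular {n R : Type*} [Fintype n] [LinearOrder n] [CommRing R]
    {N : Matrix n n R} (hN : ∀ i j, i ≤ j → N i j = 0) : (1 - N).det = 1 := by
  have h_lower : (1 - N).IsLowerTriangular := fun i j (hij : i < j) => by
    rw [Matrix.sub_apply, one_apply_ne hij.ne, hN i j hij.le, sub_zero]
  have h_diag (i : n) : (1 - N) i i = 1 := by
    rw [Matrix.sub_apply, one_apply_eq, hN i i le_rfl, sub_zero]
  simp only [det_of_isLowerTriangular _ h_lower, h_diag, Finset.prod_const_one]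

theorem Q12_mul_Q21_apply {R : Type*} [Semiring R] {M : ℕ} (i j : Fin M) :
    (Q12 R M * Q21 R M) i j = if (i : ℕ) = (j : ℕ) + 1 then 1 else 0 := by
  simp only [mul_apply, Q12, Q21, ite_mul, one_mul, zero_mul]
  split_ifs with hij
  · have hj : (j : ℕ) < M - 1 := by omega
    rw [Finset.sum_eq_single_of_mem ⟨j, hj⟩ (Finset.mem_univ _) (by grind), if_pos hij, if_pos rfl]
  · exact Finset.sum_eq_zero fun k _ => by grind

theorem isUnit_one_sub_Q12_mul_Q21 (R : Type*) [CommRing R] (M : ℕ) :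
    IsUnit (1 - Q12 R M * Q21 R M) := by
  have h_strict (i j : Fin M) (hij : i ≤ j) : (Q12 R M * Q21 R M) i j = 0 := by
    rw [Q12_mul_Q21_apply, if_neg (by omega)]
  rw [isUnit_iff_isUnit_det, det_one_sub_of_strictLowerTriangular h_strict]
  exact isUnit_one

theorem stmt_3_general (R : Type*) [CommRing R] (M : ℕ) :
    IsUnit (fromBlocks (1 : Matrix (Fin M) (Fin M) R) (Q12 R M) (Q21 R M) 1) ∧
    (fromBlocks (1 : Matrix (Fin M) (Fin M) R) (Q12 R M) (Q21 R M) 1)⁻¹ =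
      fromBlocks ((1 - Q12 R M * Q21 R M)⁻¹) 0 0 (-(1 - Q21 R M * Q12 R M)⁻¹) *
        fromBlocks (1 : Matrix (Fin M) (Fin M) R) (Q12 R M) (Q21 R M) 1 *
        fromBlocks (1 : Matrix (Fin M) (Fin M) R) 0 0 (-1) :=
  have h := isUnit_one_sub_Q12_mul_Q21 R M
  ⟨isUnit_fromBlocks_one_iff.mpr h, inv_fromBlocks_one h⟩

/-- The system matrix `Q = [[I_M, Q12],[Q21, I_{M−1}]]` is invertible, with
`Q⁻¹ = blockdiag(M1, M2) · Q · blockdiag(I_M, −I_{M−1})`, where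
`M1 = (I_M − Q12·Q21)⁻¹` and `M2 = −(I_{M−1} − Q21·Q12)⁻¹`. -/
theorem stmt_3 (F : Type*) [Field F] (M : ℕ) (hM : 1 ≤ M) :
    IsUnit (fromBlocks (1 : Matrix (Fin M) (Fin M) F) (Q12 F M) (Q21 F M) 1) ∧
    (fromBlocks (1 : Matrix (Fin M) (Fin M) F) (Q12 F M) (Q21 F M) 1)⁻¹ =
      fromBlocks ((1 - Q12 F M * Q21 F M)⁻¹) 0 0 (-(1 - Q21 F M * Q12 F M)⁻¹) *
        fromBlocks (1 : Matrix (Fin M) (Fin M) F) (Q12 F M) (Q21 F M) 1 *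
        fromBlocks (1 : Matrix (Fin M) (Fin M) F) 0 0 (-1) :=
  stmt_3_general F M
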